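/- Let λ ∈ (0,∞), let 𝓕 be a family of λ-Lipschitz maps between metric spaces, let 1 < p < ∞, and let k, l ∈ ℕ satisfy l/2 ≤ k ≤ l. Then b_{p,k}(𝓕) ≤ 2^{1−1/p}·b_{p,l}(𝓕). More precisely, for any metric spaces (X,d_X),(Y,d_Y), any map F : X → Y, and any b > 0 such that every g : 2^l → X satisfies 𝔼 ϱ_Y^g(ε,−ε)^p ≤ b^p l^{p−1} ∑_{i=1}^l 𝔼 ϱ_X^g(ε,d_iε)^p, every f : 2^k → X satisfies 𝔼 ϱ_Y^f(ε,−ε)^p ≤ 2^{p−1} b^p k^{p−1} ∑_{i=1}^k 𝔼 ϱ_X^f(ε,d_iε)^p. -/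

import Mathlib

/-!
A map on the `k`-cube is pulled back to the `l`-cube along the projection onto `k` of the `l`
coordinates. The projection preserves the uniform measure and commutes with `ε ↦ -ε`; it turns a
flip of one of the chosen coordinates into the corresponding flip, and it does not see flips of the
others. So the inequality for the pullback is the inequality for the original map, with
`l ^ (p - 1)` in place of `k ^ (p - 1)`.

To pass to the infima, the set of admissible constants for `l` must be nonempty, as the infimum of
the empty set of reals is `0`. The Lipschitz hypothesis provides this: walking from `ε` to `-ε` one
flip at a time, the triangle inequality and the power mean inequality give the inequality with
constant `1` for the identity map, because every point of the walk is uniformly distributed.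
-/

open Finset

noncomputable section

/-- Normalized Hamming distance on the cube `{±1}^n` (modeled as `Fin n → Bool`). -/
def hdist (n : ℕ) (ε δ : Fin n → Bool) : ℝ :=
  ((Finset.univ.filter fun i => ε i ≠ δ i).card : ℝ) / n

/-- `-ε`: flip all coordinates. -/
def negCube {n : ℕ} (ε : Fin n → Bool) : Fin n → Bool := fun i => !(ε i)

/-- `d_i ε`: flip the `i`-th coordinate. -/
def flipCoord {n : ℕ} (i : Fin n) (ε : Fin n → Bool) : Fin n → Bool :=
  Function.update ε i (!(ε i))

/-- Expectation with respect to the uniform probability measure on the cube. -/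
def cubeE (n : ℕ) (Φ : (Fin n → Bool) → ℝ) : ℝ :=
  (∑ ε : Fin n → Bool, Φ ε) / 2 ^ n

/-- Lipschitz constant of a map from the cube (with metric `hdist`) into a metric space,
with the convention `0 / 0 = 0`. -/
def cubeLip {n : ℕ} {X : Type} [MetricSpace X] (f : (Fin n → Bool) → X) : ℝ :=
  sSup { r : ℝ | ∃ ε δ, r = dist (f ε) (f δ) / hdist n ε δ }

/-- A map between (bundled) metric spaces. -/
structure MetricMap where
  X : Type
  Y : Type
  mX : MetricSpace X
  mY : MetricSpace Y
  F : X → Y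

attribute [instance] MetricMap.mX MetricMap.mY

/-- `a_n(𝓕)`: infimum of those `a > 0` such that for each `F : X → Y` in `𝓕` and each
`f : 2^n → X`, `𝔼 ϱ_Y^f(ε,−ε) ≤ a·Lip(f)`. -/
def aConst (𝓕 : Set MetricMap) (n : ℕ) : ℝ :=
  sInf { a : ℝ | 0 < a ∧ ∀ G ∈ 𝓕, ∀ f : (Fin n → Bool) → G.X,
    cubeE n (fun ε => dist (G.F (f ε)) (G.F (f (negCube ε)))) ≤ a * cubeLip f }

/-- `b_{p,n}(𝓕)`: infimum of those `b > 0` such that for each `F : X → Y` in `𝓕` and each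
`f : 2^n → X`, `𝔼 ϱ_Y^f(ε,−ε)^p ≤ b^p n^{p−1} ∑_i 𝔼 ϱ_X^f(ε,d_iε)^p`. -/
def bConst (𝓕 : Set MetricMap) (p : ℝ) (n : ℕ) : ℝ :=
  sInf { b : ℝ | 0 < b ∧ ∀ G ∈ 𝓕, ∀ f : (Fin n → Bool) → G.X,
    cubeE n (fun ε => dist (G.F (f ε)) (G.F (f (negCube ε))) ^ p)
      ≤ b ^ p * (n : ℝ) ^ (p - 1) *
        ∑ i : Fin n, cubeE n (fun ε => dist (f ε) (f (flipCoord i ε)) ^ p) }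

open scoped NNReal Pointwise

variable {n k l : ℕ} {p : ℝ}

lemma rpow_one_sub_one_div_mul_rpow {b c : ℝ} (hb : 0 ≤ b) (hc : 0 ≤ c) (hp : p ≠ 0) :
    (c ^ (1 - 1 / p) * b) ^ p = c ^ (p - 1) * b ^ p := by
  rw [Real.mul_rpow (Real.rpow_nonneg hc _) hb, ← Real.rpow_mul hc, sub_mul, one_mul,
    one_div_mul_cancel hp]

section Expectation

lemma cubeE_mono {Φ Ψ : (Fin n → Bool) → ℝ} (h : ∀ ε, Φ ε ≤ Ψ ε) : cubeE n Φ ≤ cubeE n Ψ :=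
  div_le_div_of_nonneg_right (sum_le_sum fun ε _ => h ε) (by positivity)

lemma cubeE_nonneg {Φ : (Fin n → Bool) → ℝ} (h : ∀ ε, 0 ≤ Φ ε) : 0 ≤ cubeE n Φ :=
  div_nonneg (sum_nonneg fun ε _ => h ε) (by positivity)

lemma cubeE_const_mul (c : ℝ) (Φ : (Fin n → Bool) → ℝ) :
    cubeE n (fun ε => c * Φ ε) = c * cubeE n Φ := by
  rw [cubeE, cubeE, ← mul_sum, mul_div_assoc]

lemma cubeE_sum {ι : Type*} (s : Finset ι) (Φ : ι → (Fin n → Bool) → ℝ) :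
    cubeE n (fun ε => ∑ i ∈ s, Φ i ε) = ∑ i ∈ s, cubeE n (Φ i) := by
  simp only [cubeE, sum_comm (t := s), sum_div]

lemma cubeE_comp_perm (e : Equiv.Perm (Fin n → Bool)) (Φ : (Fin n → Bool) → ℝ) :
    cubeE n (fun ε => Φ (e ε)) = cubeE n Φ := by
  rw [cubeE, cubeE, Equiv.sum_comp e Φ]

lemma cubeE_comp_injective {σ : Fin k → Fin l} (hσ : σ.Injective) (Φ : (Fin k → Bool) → ℝ) :
    cubeE l (fun ε => Φ (ε ∘ σ)) = cubeE k Φ := by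
  let e : Fin k ⊕ ↥(Set.range σ)ᶜ ≃ Fin l :=
    ((Equiv.ofInjective σ hσ).sumCongr (Equiv.refl _)).trans (Equiv.Set.sumCompl (Set.range σ))
  have hcard : l = k + Fintype.card ↥(Set.range σ)ᶜ := by
    simpa using (Fintype.card_congr e).symm
  let E : (Fin k → Bool) × (↥(Set.range σ)ᶜ → Bool) ≃ (Fin l → Bool) :=
    (Equiv.sumArrowEquivProdArrow _ _ _).symm.trans (e.arrowCongr (Equiv.refl Bool))
  have hE (x : Fin k → Bool) (y : ↥(Set.range σ)ᶜ → Bool) : E (x, y) ∘ σ = x := by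
    funext i
    have he : e.symm (σ i) = Sum.inl i := e.symm_apply_eq.2 rfl
    simp [E, Equiv.arrowCongr, he]
  have hsum : ∑ ε, Φ (ε ∘ σ) = 2 ^ Fintype.card ↥(Set.range σ)ᶜ * ∑ x, Φ x := by
    simp [← E.sum_comp, Fintype.sum_prod_type, hE, mul_sum]
  have hpow : (2 : ℝ) ^ l = 2 ^ Fintype.card ↥(Set.range σ)ᶜ * 2 ^ k := by
    rw [← pow_add, add_comm, ← hcard]
  rw [cubeE, cubeE, hsum, hpow, mul_div_mul_left _ _ (by positivity)]

end Expectation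

section Path

/-- Flip the first `j` coordinates: the `j`-th point of the path from `ε` to `-ε` in the cube. -/
def flipFirst (j : ℕ) (ε : Fin n → Bool) : Fin n → Bool :=
  fun i => if (i : ℕ) < j then !(ε i) else ε i

lemma flipFirst_involutive (j : ℕ) :
    Function.Involutive (flipFirst j : (Fin n → Bool) → Fin n → Bool) := by
  intro ε
  funext i
  by_cases h : (i : ℕ) < j <;> simp [flipFirst, h]

lemma flipFirst_zero (ε : Fin n → Bool) : flipFirst 0 ε = ε := by
  funext i
  simp [flipFirst]

lemma flipFirst_self (ε : Fin n → Bool) : flipFirst n ε = negCube ε := by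
  funext i
  simp [flipFirst, negCube]

lemma flipFirst_succ (i : Fin n) (ε : Fin n → Bool) :
    flipFirst (i + 1) ε = flipCoord i (flipFirst i ε) := by
  funext j
  rcases eq_or_ne j i with rfl | hji
  · simp [flipFirst, flipCoord]
  · have hlt : (j : ℕ) < i + 1 ↔ (j : ℕ) < i := by omega
    simp [flipFirst, flipCoord, hji, hlt]

lemma dist_negCube_le_sum {X : Type*} [PseudoMetricSpace X] (f : (Fin n → Bool) → X)
    (ε : Fin n → Bool) :
    dist (f ε) (f (negCube ε)) ≤
      ∑ i : Fin n, dist (f (flipFirst i ε)) (f (flipCoord i (flipFirst i ε))) := by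
  have h := dist_le_range_sum_dist (fun j => f (flipFirst j ε)) n
  rw [← Fin.sum_univ_eq_sum_range
    (fun j => dist (f (flipFirst j ε)) (f (flipFirst (j + 1) ε)))] at h
  simpa only [flipFirst_zero, flipFirst_self, flipFirst_succ] using h

lemma dist_negCube_rpow_le_sum {X : Type*} [PseudoMetricSpace X] (hp : 1 ≤ p)
    (f : (Fin n → Bool) → X) (ε : Fin n → Bool) :
    dist (f ε) (f (negCube ε)) ^ p ≤ (n : ℝ) ^ (p - 1) *
      ∑ i : Fin n, dist (f (flipFirst i ε)) (f (flipCoord i (flipFirst i ε))) ^ p :=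
  calc dist (f ε) (f (negCube ε)) ^ p
      ≤ (∑ i : Fin n, dist (f (flipFirst i ε)) (f (flipCoord i (flipFirst i ε)))) ^ p :=
        Real.rpow_le_rpow dist_nonneg (dist_negCube_le_sum f ε) (by linarith)
    _ ≤ _ := by
        simpa using Real.rpow_sum_le_const_mul_sum_rpow_of_nonneg univ hp
          fun (i : Fin n) _ => dist_nonneg (x := f (flipFirst i ε))

end Path

/-- The inequality `𝔼 ϱ_Y^f(ε,−ε)^p ≤ C ∑_i 𝔼 ϱ_X^f(ε,d_iε)^p` for all `f : 2^n → X`, comparing the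
diagonals of the cube with its edges. The constants in the definition of `b_{p,n}` correspond to
`C = b^p n^{p−1}`; with `C` unnormalized, the inequality is inherited by smaller cubes. -/
def DiagonalIneq {X Y : Type*} [PseudoMetricSpace X] [PseudoMetricSpace Y] (F : X → Y) (p : ℝ)
    (n : ℕ) (C : ℝ) : Prop :=
  ∀ f : (Fin n → Bool) → X,
    cubeE n (fun ε => dist (F (f ε)) (F (f (negCube ε))) ^ p)
      ≤ C * ∑ i : Fin n, cubeE n (fun ε => dist (f ε) (f (flipCoord i ε)) ^ p)

section DiagonalIneq

variable {X Y Z : Type*} [PseudoMetricSpace X] [PseudoMetricSpace Y] [PseudoMetricSpace Z]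
  {F : X → Y} {C C' : ℝ}

lemma DiagonalIneq.mono (h : DiagonalIneq F p n C) (hC : C ≤ C') : DiagonalIneq F p n C' :=
  fun f => (h f).trans <| mul_le_mul_of_nonneg_right hC <|
    sum_nonneg fun _ _ => cubeE_nonneg fun _ => Real.rpow_nonneg dist_nonneg p

lemma sum_cubeE_dist_flipCoord_comp_injective (hp : p ≠ 0) {σ : Fin k → Fin l}
    (hσ : σ.Injective) (f : (Fin k → Bool) → X) :
    ∑ j : Fin l, cubeE l (fun ε => dist (f (ε ∘ σ)) (f (flipCoord j ε ∘ σ)) ^ p) =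
      ∑ i : Fin k, cubeE k (fun ε => dist (f ε) (f (flipCoord i ε)) ^ p) := by
  have hflip (i : Fin k) (ε : Fin l → Bool) : flipCoord (σ i) ε ∘ σ = flipCoord i (ε ∘ σ) :=
    Function.update_comp_eq_of_injective ε hσ i _
  have hunseen (j : Fin l) (hj : j ∉ Set.range σ) (ε : Fin l → Bool) :
      flipCoord j ε ∘ σ = ε ∘ σ :=
    Function.update_comp_eq_of_notMem_range ε _ hj
  refine (Fintype.sum_of_injective σ hσ _ _ (fun j hj => ?_) fun i => ?_).symm
  · simp [hunseen j hj, Real.zero_rpow hp, cubeE]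
  · simp only [hflip]
    exact (cubeE_comp_injective hσ fun ε => dist (f ε) (f (flipCoord i ε)) ^ p).symm

lemma DiagonalIneq.of_le (h : DiagonalIneq F p l C) (hp : p ≠ 0) (hkl : k ≤ l) :
    DiagonalIneq F p k C := by
  intro f
  let σ : Fin k → Fin l := Fin.castLE hkl
  have hσ : σ.Injective := Fin.castLE_injective hkl
  calc cubeE k (fun ε => dist (F (f ε)) (F (f (negCube ε))) ^ p)
      = cubeE l (fun ε => dist (F (f (ε ∘ σ))) (F (f (negCube ε ∘ σ))) ^ p) :=
        (cubeE_comp_injective hσ fun ε => dist (F (f ε)) (F (f (negCube ε))) ^ p).symm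
    _ ≤ C * ∑ j : Fin l, cubeE l (fun ε => dist (f (ε ∘ σ)) (f (flipCoord j ε ∘ σ)) ^ p) :=
        h fun ε => f (ε ∘ σ)
    _ = C * ∑ i : Fin k, cubeE k (fun ε => dist (f ε) (f (flipCoord i ε)) ^ p) := by
        rw [sum_cubeE_dist_flipCoord_comp_injective hp hσ]

lemma DiagonalIneq.of_le_of_le_mul {b c : ℝ} (h : DiagonalIneq F p l (b ^ p * (l : ℝ) ^ (p - 1)))
    (hb : 0 ≤ b) (hc : 0 ≤ c) (hp : 1 ≤ p) (hkl : k ≤ l) (hlk : (l : ℝ) ≤ c * k) :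
    DiagonalIneq F p k (c ^ (p - 1) * b ^ p * (k : ℝ) ^ (p - 1)) := by
  refine (h.of_le (by linarith) hkl).mono ?_
  calc b ^ p * (l : ℝ) ^ (p - 1)
      ≤ b ^ p * (c * k) ^ (p - 1) := by gcongr
    _ = c ^ (p - 1) * b ^ p * (k : ℝ) ^ (p - 1) := by
        rw [Real.mul_rpow hc k.cast_nonneg]
        ring

lemma diagonalIneq_id (hp : 1 ≤ p) (n : ℕ) :
    DiagonalIneq (id : X → X) p n ((n : ℝ) ^ (p - 1)) := by
  intro f
  calc cubeE n (fun ε => dist (f ε) (f (negCube ε)) ^ p)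
      ≤ cubeE n (fun ε => (n : ℝ) ^ (p - 1) *
          ∑ i : Fin n, dist (f (flipFirst i ε)) (f (flipCoord i (flipFirst i ε))) ^ p) :=
        cubeE_mono (dist_negCube_rpow_le_sum hp f)
    _ = (n : ℝ) ^ (p - 1) * ∑ i : Fin n,
          cubeE n (fun ε => dist (f (flipFirst i ε)) (f (flipCoord i (flipFirst i ε))) ^ p) := by
        rw [cubeE_const_mul, cubeE_sum]
    _ = (n : ℝ) ^ (p - 1) *
          ∑ i : Fin n, cubeE n (fun ε => dist (f ε) (f (flipCoord i ε)) ^ p) := by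
        congr! 2 with i
        exact cubeE_comp_perm (flipFirst_involutive i).toPerm
          fun ε => dist (f ε) (f (flipCoord i ε)) ^ p

lemma DiagonalIneq.lipschitz_comp {G : Y → Z} {K : ℝ≥0} (h : DiagonalIneq F p n C)
    (hG : LipschitzWith K G) (hp : 0 ≤ p) : DiagonalIneq (G ∘ F) p n ((K : ℝ) ^ p * C) := by
  intro f
  calc cubeE n (fun ε => dist (G (F (f ε))) (G (F (f (negCube ε)))) ^ p)
      ≤ cubeE n (fun ε => (K : ℝ) ^ p * dist (F (f ε)) (F (f (negCube ε))) ^ p) :=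
        cubeE_mono fun ε => by
          rw [← Real.mul_rpow K.coe_nonneg dist_nonneg]
          exact Real.rpow_le_rpow dist_nonneg (hG.dist_le_mul _ _) hp
    _ = (K : ℝ) ^ p * cubeE n (fun ε => dist (F (f ε)) (F (f (negCube ε))) ^ p) :=
        cubeE_const_mul _ _
    _ ≤ (K : ℝ) ^ p * (C * ∑ i : Fin n, cubeE n (fun ε => dist (f ε) (f (flipCoord i ε)) ^ p)) :=
        mul_le_mul_of_nonneg_left (h f) (Real.rpow_nonneg K.coe_nonneg p)
    _ = _ := (mul_assoc _ _ _).symm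

lemma diagonalIneq_of_lipschitzWith {K : ℝ≥0} (hF : LipschitzWith K F) (hp : 1 ≤ p) (n : ℕ) :
    DiagonalIneq F p n ((K : ℝ) ^ p * (n : ℝ) ^ (p - 1)) :=
  (diagonalIneq_id hp n).lipschitz_comp hF (by linarith)

end DiagonalIneq

/-- The set of constants whose infimum is `b_{p,n}(𝓕)`. -/
def admissibleConsts (𝓕 : Set MetricMap) (p : ℝ) (n : ℕ) : Set ℝ :=
  {b | 0 < b ∧ ∀ G ∈ 𝓕, DiagonalIneq G.F p n (b ^ p * (n : ℝ) ^ (p - 1))}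

section AdmissibleConsts

variable {𝓕 : Set MetricMap}

lemma bConst_eq_sInf (𝓕 : Set MetricMap) (p : ℝ) (n : ℕ) :
    bConst 𝓕 p n = sInf (admissibleConsts 𝓕 p n) :=
  rfl

lemma bddBelow_admissibleConsts (𝓕 : Set MetricMap) (p : ℝ) (n : ℕ) :
    BddBelow (admissibleConsts 𝓕 p n) :=
  ⟨0, fun _ hb => hb.1.le⟩

lemma admissibleConsts_nonempty_of_lipschitzWith {K : ℝ≥0}
    (hF : ∀ G ∈ 𝓕, LipschitzWith K G.F) (hp : 1 ≤ p) (n : ℕ) :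
    (admissibleConsts 𝓕 p n).Nonempty :=
  ⟨(K + 1 : ℝ≥0), by positivity, fun G hG =>
    diagonalIneq_of_lipschitzWith ((hF G hG).weaken (by simp)) hp n⟩

lemma smul_admissibleConsts_subset {c : ℝ} (hc : 0 < c) (hp : 1 ≤ p) (hkl : k ≤ l)
    (hlk : (l : ℝ) ≤ c * k) :
    c ^ (1 - 1 / p) • admissibleConsts 𝓕 p l ⊆ admissibleConsts 𝓕 p k := by
  rintro _ ⟨b, ⟨hb, h⟩, rfl⟩
  refine ⟨mul_pos (Real.rpow_pos_of_pos hc _) hb, fun G hG => ?_⟩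
  change DiagonalIneq G.F p k ((c ^ (1 - 1 / p) * b) ^ p * (k : ℝ) ^ (p - 1))
  rw [rpow_one_sub_one_div_mul_rpow hb.le hc.le (by linarith)]
  exact (h G hG).of_le_of_le_mul hb.le hc.le hp hkl hlk

end AdmissibleConsts

theorem bConst_doubling_general {𝓕 : Set MetricMap} {c : ℝ}
    (hne : (admissibleConsts 𝓕 p l).Nonempty) (hp : 1 ≤ p) (hc : 0 < c) (hkl : k ≤ l)
    (hlk : (l : ℝ) ≤ c * k) :
    bConst 𝓕 p k ≤ c ^ (1 - 1 / p) * bConst 𝓕 p l ∧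
    ∀ (X Y : Type*) [PseudoMetricSpace X] [PseudoMetricSpace Y] (F : X → Y) (b : ℝ), 0 ≤ b →
      DiagonalIneq F p l (b ^ p * (l : ℝ) ^ (p - 1)) →
      DiagonalIneq F p k (c ^ (p - 1) * b ^ p * (k : ℝ) ^ (p - 1)) := by
  refine ⟨?_, fun X Y _ _ F b hb h => h.of_le_of_le_mul hb hc.le hp hkl hlk⟩
  calc bConst 𝓕 p k
      ≤ sInf (c ^ (1 - 1 / p) • admissibleConsts 𝓕 p l) :=
        csInf_le_csInf (bddBelow_admissibleConsts 𝓕 p k) hne.smul_set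
          (smul_admissibleConsts_subset hc hp hkl hlk)
    _ = c ^ (1 - 1 / p) * bConst 𝓕 p l := by
        rw [Real.sInf_smul_of_nonneg (Real.rpow_nonneg hc.le _), smul_eq_mul, bConst_eq_sInf]

/-- If `l/2 ≤ k ≤ l` then `b_{p,k}(𝓕) ≤ 2^{1−1/p}·b_{p,l}(𝓕)`, together with the precise
pointwise statement. -/
theorem bConst_doubling (lam : ℝ) (hlam : 0 < lam) (𝓕 : Set MetricMap)
    (hLip : ∀ G ∈ 𝓕, ∀ x y : G.X, dist (G.F x) (G.F y) ≤ lam * dist x y)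
    (p : ℝ) (hp : 1 < p) (k l : ℕ) (hk : 0 < k) (hkl : k ≤ l) (hlk : l ≤ 2 * k) :
    bConst 𝓕 p k ≤ (2 : ℝ) ^ (1 - 1 / p) * bConst 𝓕 p l ∧
    ∀ (X Y : Type) [MetricSpace X] [MetricSpace Y] (F : X → Y) (b : ℝ), 0 < b →
      (∀ g : (Fin l → Bool) → X,
        cubeE l (fun ε => dist (F (g ε)) (F (g (negCube ε))) ^ p)
          ≤ b ^ p * (l : ℝ) ^ (p - 1) *
            ∑ i : Fin l, cubeE l (fun ε => dist (g ε) (g (flipCoord i ε)) ^ p)) →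
      ∀ f : (Fin k → Bool) → X,
        cubeE k (fun ε => dist (F (f ε)) (F (f (negCube ε))) ^ p)
          ≤ (2 : ℝ) ^ (p - 1) * b ^ p * (k : ℝ) ^ (p - 1) *
            ∑ i : Fin k, cubeE k (fun ε => dist (f ε) (f (flipCoord i ε)) ^ p) := by
  have hne := admissibleConsts_nonempty_of_lipschitzWith
    (fun G hG => LipschitzWith.of_dist_le' (hLip G hG)) hp.le l
  have h := bConst_doubling_general hne hp.le two_pos hkl (by exact_mod_cast hlk)
  exact ⟨h.1, fun X Y _ _ F b hb => h.2 X Y F b hb.le⟩
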